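/- Let 0 < α ≤ 1 and β ≥ α be real numbers. Then the function f(x) = E_{α,β}(−x) is strictly decreasing on [0, ∞), satisfies f(0) = 1/Γ(β) and f(x) → 0 as x → ∞, and maps [0, ∞) bijectively onto the half-open interval (0, 1/Γ(β)]. Consequently the inverse Mittag-Leffler function −L_{α,β} : (0, 1/Γ(β)] → [0, ∞) is well defined by −L_{α,β}(y) = x iff y = E_{α,β}(−x). -/

import Mathlib

/-!
Euler's limit `GammaSeq s n → Γ(s)` turns `E_{α,β}(x)` into the limit of positive multiples of the
coefficients of `t ^ (n + 1)` in `(1 - t) ^ (α - β) / ((1 - t) ^ α - c)`, where `c = x * n ^ (-α)`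
tends to `0`. For `0 < α ≤ 1` both `1 - (1 - t) ^ α` and `(1 - t) ^ (α - β)` have nonnegative
coefficients, so those of `(1 - t) ^ (α - β) / ((1 - c) - (1 - (1 - t) ^ α))` are nonnegative and
increasing in `c < 1`. Hence `E_{α,β}` is nonnegative and monotone on all of `ℝ`. Monotonicity of
`E_{α,β+1}` and the identity `E_{α,β} = β E_{α,β+1} + α x (d/dx) E_{α,β+1}` give
`E_{α,β}(x) ≤ β E_{α,β+1}(x)` for `x ≤ 0`, and the right side is `O(1 / |x|)` because
`E_{α,γ}(x) = 1 / Γ(γ) + x E_{α,γ+α}(x)` is nonnegative for `γ = β + 1 - α`. Finally, a monotone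
analytic function that is not constant is strictly monotone.
-/

open Filter Finset Set Topology
open scoped Nat

section Multichoose

variable {R : Type*} [CommRing R] [BinomialRing R]

theorem factorial_mul_multichoose (r : R) (n : ℕ) :
    (n ! : R) * Ring.multichoose r n = ∏ j ∈ range n, (r + j) := by
  rw [← nsmul_eq_mul, Ring.factorial_nsmul_multichoose_eq_ascPochhammer,
    Polynomial.ascPochhammer_smeval_eq_eval]
  induction n with
  | zero => simp
  | succ n ih => rw [ascPochhammer_succ_eval, ih, prod_range_succ]

theorem multichoose_eq_negOnePow_smul_choose (r : R) (n : ℕ) :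
    Ring.multichoose r n = Int.negOnePow n • Ring.choose (-r) n := by
  rw [Ring.choose_neg', smul_smul, Int.units_mul_self, one_smul]

theorem multichoose_add (r s : R) (n : ℕ) :
    Ring.multichoose (r + s) n =
      ∑ p ∈ antidiagonal n, Ring.multichoose r p.1 * Ring.multichoose s p.2 := by
  simp only [multichoose_eq_negOnePow_smul_choose]
  rw [neg_add, Ring.add_choose_eq n (Commute.all _ _), smul_sum]
  refine sum_congr rfl fun p hp => ?_
  rw [smul_mul_smul_comm, ← Int.negOnePow_add, ← Nat.cast_add, mem_antidiagonal.mp hp]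

variable [LinearOrder R] [IsStrictOrderedRing R]

theorem multichoose_nonneg {r : R} (hr : 0 ≤ r) (n : ℕ) : 0 ≤ Ring.multichoose r n := by
  refine nonneg_of_mul_nonneg_right (a := (n ! : R)) ?_ (by positivity)
  rw [factorial_mul_multichoose]
  positivity

theorem multichoose_succ_nonpos {r : R} (hr₁ : -1 ≤ r) (hr₀ : r ≤ 0) (n : ℕ) :
    Ring.multichoose r (n + 1) ≤ 0 := by
  refine nonpos_of_mul_nonpos_right (a := ((n + 1)! : R)) ?_ (by positivity)
  rw [factorial_mul_multichoose, prod_range_succ', Nat.cast_zero, add_zero]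
  refine mul_nonpos_of_nonneg_of_nonpos (prod_nonneg fun j _ => ?_) hr₀
  push_cast
  linarith [j.cast_nonneg (α := R)]

end Multichoose

theorem summable_eval_mul_geometric {R : Type*} [NormedRing R] [CompleteSpace R]
    (p : Polynomial R) {c : R} (hc : ‖c‖ < 1) : Summable fun k : ℕ => p.eval (k : R) * c ^ k := by
  simp_rw [Polynomial.eval_eq_sum_range, Finset.sum_mul, mul_assoc]
  exact summable_sum fun i _ => (summable_pow_mul_geometric_of_norm_lt_one i hc).mul_left _

theorem hasFPowerSeriesOnBall_tsum {𝕜 : Type*} [NontriviallyNormedField 𝕜] [CompleteSpace 𝕜]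
    {a : ℕ → 𝕜} (ha : ∀ r : ℝ, Summable fun n => ‖a n‖ * r ^ n) :
    HasFPowerSeriesOnBall (fun x => ∑' n, a n * x ^ n) (.ofScalars 𝕜 a) 0 ⊤ := by
  set p := FormalMultilinearSeries.ofScalars 𝕜 a
  have hp : p.radius = ⊤ := p.radius_eq_top_of_summable_norm fun r => by
    simpa only [p, FormalMultilinearSeries.ofScalars_norm] using ha r
  have hsum : p.sum = fun x => ∑' n, a n * x ^ n :=
    FormalMultilinearSeries.ofScalarsSum_eq_tsum (E := 𝕜) a
  simpa only [hp, hsum] using p.hasFPowerSeriesOnBall (by rw [hp]; exact ENNReal.zero_lt_top)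

theorem hasSum_nsmul_apply_fderiv {𝕜 E F : Type*} [NontriviallyNormedField 𝕜]
    [NormedAddCommGroup E] [NormedSpace 𝕜 E] [NormedAddCommGroup F] [NormedSpace 𝕜 F]
    [CompleteSpace F] {f : E → F} {p : FormalMultilinearSeries 𝕜 E F} {x y : E} {r : ENNReal}
    (hf : HasFPowerSeriesOnBall f p x r) (hy : y ∈ Metric.eball 0 r) :
    HasSum (fun n => n • p n fun _ => y) (fderiv 𝕜 f (x + y) y) := by
  have h := (ContinuousLinearMap.apply 𝕜 F y).hasSum (hf.fderiv.hasSum hy)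
  simp only [ContinuousLinearMap.apply_apply,
    FormalMultilinearSeries.derivSeries_apply_diag] at h
  simpa using (hasSum_nat_add_iff (f := fun n => n • p n fun _ => y) 1).mp h

theorem bijOn_Ici_Ioc_of_tendsto {α δ : Type*} [ConditionallyCompleteLinearOrder α]
    [TopologicalSpace α] [OrderTopology α] [DenselyOrdered α] [NoMaxOrder α]
    [LinearOrder δ] [TopologicalSpace δ] [OrderClosedTopology δ] {f : α → δ} {a : α} {l : δ}
    (hf : StrictAntiOn f (Ici a)) (hcont : ContinuousOn f (Ici a))
    (hl : Tendsto f atTop (𝓝 l)) :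
    BijOn f (Ici a) (Ioc l (f a)) := by
  have le_apply {x : α} (hx : a ≤ x) : l ≤ f x :=
    le_of_tendsto hl <| (eventually_ge_atTop x).mono fun y hy =>
      hf.antitoneOn hx (hx.trans hy) hy
  refine ⟨fun x (hx : a ≤ x) => ⟨?_, hf.antitoneOn self_mem_Ici hx hx⟩, hf.injOn,
    isPreconnected_Ici.intermediate_value_Ioc self_mem_Ici
      (le_principal_iff.mpr (Ici_mem_atTop a)) hcont hl⟩
  obtain ⟨y, hxy⟩ := exists_gt x
  exact (le_apply (hx.trans hxy.le)).trans_lt (hf hx (hx.trans hxy.le) hxy)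

theorem strictMonoOn_of_analyticOnNhd {f : ℝ → ℝ} {s : Set ℝ} (hs : s.OrdConnected)
    (hf : AnalyticOnNhd ℝ f s) (hmono : MonotoneOn f s) (hne : (f '' s).Nontrivial) :
    StrictMonoOn f s := by
  intro x hx y hy hxy
  refine (hmono hx hy hxy.le).lt_of_ne fun heq => ?_
  obtain ⟨z, hxz, hzy⟩ := exists_between hxy
  have hz : z ∈ s := hs.out hx hy ⟨hxz.le, hzy.le⟩
  have hconst : f =ᶠ[𝓝 z] fun _ => f x := by
    filter_upwards [Icc_mem_nhds hxz hzy] with w hw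
    have hws : w ∈ s := hs.out hx hy hw
    exact le_antisymm ((hmono hws hy hw.2).trans heq.ge) (hmono hx hws hw.1)
  have heqOn : EqOn f (fun _ => f x) s :=
    hf.eqOn_of_preconnected_of_eventuallyEq analyticOnNhd_const hs.isPreconnected hz hconst
  refine hne.not_subsingleton (subsingleton_singleton.anti (t := {f x}) ?_)
  rintro _ ⟨w, hw, rfl⟩
  exact heqOn hw

/-- The coefficient of `t ^ n` in `(1 - t) ^ (α - β) / ((1 - t) ^ α - c)`: a discrete
analogue of the Mittag-Leffler function, with the generalized binomial coefficients
`Ring.multichoose (α * k + β) n` in place of `1 / Γ(α * k + β)`. It is meant for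
`|c| < 1`; where the series diverges the value is `0`. -/
noncomputable def discreteMittagLeffler (α β : ℝ) (n : ℕ) (c : ℝ) : ℝ :=
  ∑' k : ℕ, Ring.multichoose (α * k + β) n * c ^ k

theorem summable_multichoose_mul_pow (α β : ℝ) (n : ℕ) {c : ℝ} (hc : |c| < 1) :
    Summable fun k : ℕ => Ring.multichoose (α * k + β) n * c ^ k := by
  have hprod := summable_eval_mul_geometric
    (∏ j ∈ range n, (.C α * .X + .C (β + j)) : Polynomial ℝ) (c := c) hc
  refine (hprod.mul_left (n ! : ℝ)⁻¹).congr fun k => ?_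
  rw [Polynomial.eval_prod, ← mul_assoc]
  congr 1
  rw [inv_mul_eq_iff_eq_mul₀ (by positivity), factorial_mul_multichoose]
  simp [add_assoc]

theorem discreteMittagLeffler_eq_add_mul (α β : ℝ) (n : ℕ) {c : ℝ} (hc : |c| < 1) :
    discreteMittagLeffler α β n c =
      Ring.multichoose β n + c * discreteMittagLeffler α (β + α) n c := by
  rw [discreteMittagLeffler, (summable_multichoose_mul_pow α β n hc).tsum_eq_zero_add,
    discreteMittagLeffler, ← tsum_mul_left]
  simp only [Nat.cast_zero, mul_zero, zero_add, pow_zero, mul_one]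
  congr 1
  refine tsum_congr fun k => ?_
  rw [show α * ((k + 1 : ℕ) : ℝ) + β = α * k + (β + α) by push_cast; ring, pow_succ]
  ring

theorem discreteMittagLeffler_add (α β γ : ℝ) (n : ℕ) {c : ℝ} (hc : |c| < 1) :
    discreteMittagLeffler α (β + γ) n c =
      ∑ p ∈ antidiagonal n, discreteMittagLeffler α β p.1 c * Ring.multichoose γ p.2 := by
  simp only [discreteMittagLeffler, ← tsum_mul_right]
  rw [← Summable.tsum_finsetSum fun p _ => (summable_multichoose_mul_pow α β p.1 hc).mul_right _]
  refine tsum_congr fun k => ?_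
  rw [← add_assoc, multichoose_add, sum_mul]
  exact sum_congr rfl fun p _ => by ring

theorem one_sub_mul_discreteMittagLeffler (α β : ℝ) (n : ℕ) {c : ℝ} (hc : |c| < 1) :
    (1 - c) * discreteMittagLeffler α β n c = Ring.multichoose (β - α) n +
      ∑ j ∈ range n, discreteMittagLeffler α β j c * -Ring.multichoose (-α) (n - j) := by
  have hshift := discreteMittagLeffler_eq_add_mul α (β - α) n hc
  rw [sub_add_cancel, sub_eq_add_neg β α, discreteMittagLeffler_add α β (-α) n hc,
    Nat.sum_antidiagonal_eq_sum_range_succ_mk, sum_range_succ, Nat.sub_self,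
    Ring.multichoose_zero_right, ← sub_eq_add_neg] at hshift
  simp only [mul_neg, sum_neg_distrib]
  linarith

section Monotone

variable {α β : ℝ}

theorem neg_multichoose_neg_nonneg (hα₀ : 0 ≤ α) (hα₁ : α ≤ 1) {m : ℕ} (hm : m ≠ 0) :
    0 ≤ -Ring.multichoose (-α) m := by
  obtain ⟨m, rfl⟩ := Nat.exists_eq_succ_of_ne_zero hm
  exact neg_nonneg.mpr (multichoose_succ_nonpos (neg_le_neg hα₁) (neg_nonpos.mpr hα₀) m)

theorem discreteMittagLeffler_nonneg (hα₀ : 0 ≤ α) (hα₁ : α ≤ 1) (hβ : α ≤ β) (n : ℕ) {c : ℝ}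
    (hc : |c| < 1) : 0 ≤ discreteMittagLeffler α β n c := by
  induction n using Nat.strong_induction_on with
  | _ n ih =>
    refine nonneg_of_mul_nonneg_right ?_ (sub_pos.mpr (lt_of_abs_lt hc))
    rw [one_sub_mul_discreteMittagLeffler α β n hc]
    refine add_nonneg (multichoose_nonneg (sub_nonneg.mpr hβ) n) (sum_nonneg fun j hj => ?_)
    have hjn := mem_range.mp hj
    exact mul_nonneg (ih j hjn) (neg_multichoose_neg_nonneg hα₀ hα₁ (Nat.sub_ne_zero_of_lt hjn))

theorem discreteMittagLeffler_monotoneOn (hα₀ : 0 ≤ α) (hα₁ : α ≤ 1) (hβ : α ≤ β) (n : ℕ) :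
    MonotoneOn (discreteMittagLeffler α β n) {c | |c| < 1} := by
  intro c hc d hd hcd
  induction n using Nat.strong_induction_on with
  | _ n ih =>
    refine le_of_mul_le_mul_left ?_ (sub_pos.mpr (lt_of_abs_lt hd))
    calc (1 - d) * discreteMittagLeffler α β n c
        ≤ (1 - c) * discreteMittagLeffler α β n c :=
          mul_le_mul_of_nonneg_right (sub_le_sub_left hcd 1)
            (discreteMittagLeffler_nonneg hα₀ hα₁ hβ n hc)
      _ ≤ (1 - d) * discreteMittagLeffler α β n d := by
          rw [one_sub_mul_discreteMittagLeffler α β n hc,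
            one_sub_mul_discreteMittagLeffler α β n hd]
          gcongr with j hj
          · exact neg_multichoose_neg_nonneg hα₀ hα₁ (Nat.sub_ne_zero_of_lt (mem_range.mp hj))
          · exact ih j (mem_range.mp hj)

end Monotone

theorem inv_gammaSeq (s : ℝ) (n : ℕ) :
    (Real.GammaSeq s n)⁻¹ = (n + 1) * Ring.multichoose s (n + 1) * (n : ℝ) ^ (-s) := by
  rw [Real.GammaSeq, ← factorial_mul_multichoose, Real.rpow_neg n.cast_nonneg, Nat.factorial_succ]
  push_cast
  field_simp

theorem gammaSeq_pos {s : ℝ} (hs : 0 < s) {n : ℕ} (hn : n ≠ 0) : 0 < Real.GammaSeq s n := by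
  rw [Real.GammaSeq]
  positivity

theorem one_add_mul_le_rpow_of_nonpos {s p : ℝ} (hs : -1 < s) (hp : p ≤ 0) :
    1 + p * s ≤ (1 + s) ^ p := by
  have hs₁ : 0 < 1 + s := by linarith
  have hlog : Real.log (1 + s) ≤ s := by linarith [Real.log_le_sub_one_of_pos hs₁]
  rw [Real.rpow_def_of_pos hs₁]
  linarith [Real.add_one_le_exp (Real.log (1 + s) * p), mul_le_mul_of_nonpos_right hlog hp]

theorem gammaSeq_le_gammaSeq_succ {s : ℝ} (hs : 0 < s) {n : ℕ} (hn : n ≠ 0) :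
    Real.GammaSeq s n ≤ Real.GammaSeq s (n + 1) := by
  have hn₀ : (0 : ℝ) < n := by positivity
  have hratio : 1 + s / (n + 1) ≤ ((n + 1) / n : ℝ) ^ s := by
    have hneg : (-1 : ℝ) < -(1 / (n + 1)) := by
      rw [neg_lt_neg_iff, div_lt_one (by positivity)]
      linarith
    have hfrac : (1 + -(1 / (n + 1)) : ℝ) = n / (n + 1) := by
      field_simp
      ring
    have hbernoulli := one_add_mul_le_rpow_of_nonpos hneg (neg_nonpos.mpr hs.le)
    rw [Real.rpow_neg_eq_inv_rpow, hfrac, inv_div] at hbernoulli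
    exact (by ring : 1 + s / (n + 1) = 1 + -s * -(1 / (n + 1))).trans_le hbernoulli
  have hsucc : Real.GammaSeq s (n + 1) =
      Real.GammaSeq s n * (((n + 1) / n : ℝ) ^ s / (1 + s / (n + 1))) := by
    rw [Real.GammaSeq, Real.GammaSeq, prod_range_succ _ (n + 1), Nat.factorial_succ,
      Real.div_rpow (by positivity) hn₀.le]
    push_cast
    field_simp
    ring
  rw [hsucc]
  exact le_mul_of_one_le_right (gammaSeq_pos hs hn).le ((one_le_div (by positivity)).mpr hratio)

theorem gammaSeq_monotoneOn {s : ℝ} (hs : 0 < s) : MonotoneOn (Real.GammaSeq s) (Ici 1) :=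
  monotoneOn_nat_Ici_of_le_succ fun _ hn =>
    gammaSeq_le_gammaSeq_succ hs (Nat.one_le_iff_ne_zero.mp hn)

theorem gammaSeq_le_Gamma {s : ℝ} (hs : 0 < s) {n : ℕ} (hn : 1 ≤ n) :
    Real.GammaSeq s n ≤ Real.Gamma s :=
  ge_of_tendsto (Real.GammaSeq_tendsto_Gamma s) <|
    (eventually_ge_atTop n).mono fun _ hm => gammaSeq_monotoneOn hs hn (hn.trans hm) hm

/-- The two-parameter Mittag-Leffler function `E_{α,β}` of a real argument, for `α, β > 0`. -/
noncomputable def mittagLeffler (α β x : ℝ) : ℝ :=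
  ∑' k : ℕ, x ^ k / Real.Gamma (α * k + β)

theorem eventually_abs_mul_rpow_neg_lt_one {α : ℝ} (hα : 0 < α) (x : ℝ) :
    ∀ᶠ n : ℕ in atTop, |x * (n : ℝ) ^ (-α)| < 1 := by
  have h : Tendsto (fun n : ℕ => |x * (n : ℝ) ^ (-α)|) atTop (𝓝 0) := by
    simpa using
      (((tendsto_rpow_neg_atTop hα).comp tendsto_natCast_atTop_atTop).const_mul x).abs
  exact h.eventually_lt_const one_pos

theorem pow_div_gammaSeq (α β x : ℝ) {n : ℕ} (hn : n ≠ 0) (k : ℕ) :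
    x ^ k / Real.GammaSeq (α * k + β) n = (n + 1) * (n : ℝ) ^ (-β) *
      (Ring.multichoose (α * k + β) (n + 1) * (x * (n : ℝ) ^ (-α)) ^ k) := by
  have hn₀ : (0 : ℝ) < n := by positivity
  rw [div_eq_mul_inv, inv_gammaSeq, neg_add, Real.rpow_add hn₀, ← neg_mul,
    Real.rpow_mul_natCast hn₀.le, mul_pow]
  ring

theorem tsum_pow_div_gammaSeq (α β x : ℝ) {n : ℕ} (hn : n ≠ 0) :
    ∑' k : ℕ, x ^ k / Real.GammaSeq (α * k + β) n =
      (n + 1) * (n : ℝ) ^ (-β) * discreteMittagLeffler α β (n + 1) (x * (n : ℝ) ^ (-α)) := by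
  simp only [pow_div_gammaSeq α β x hn, tsum_mul_left, discreteMittagLeffler]

theorem exists_summable_pow_div_gammaSeq {α : ℝ} (hα : 0 < α) (β x : ℝ) :
    ∃ n ≥ 1, Summable fun k : ℕ => x ^ k / Real.GammaSeq (α * k + β) n := by
  obtain ⟨n, hx, hn⟩ :=
    ((eventually_abs_mul_rpow_neg_lt_one hα x).and (eventually_ge_atTop 1)).exists
  refine ⟨n, hn, ?_⟩
  simp only [pow_div_gammaSeq α β x (Nat.one_le_iff_ne_zero.mp hn)]
  exact (summable_multichoose_mul_pow α β (n + 1) hx).mul_left _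

section MittagLeffler

variable {α β : ℝ}

theorem summable_pow_div_Gamma (hα : 0 < α) (hβ : 0 < β) (x : ℝ) :
    Summable fun k : ℕ => x ^ k / Real.Gamma (α * k + β) := by
  obtain ⟨n, hn, hsum⟩ := exists_summable_pow_div_gammaSeq hα β |x|
  refine hsum.of_norm_bounded fun k => ?_
  have hk : 0 < α * k + β := by positivity
  rw [norm_div, norm_pow, Real.norm_eq_abs, Real.norm_of_nonneg (Real.Gamma_pos_of_pos hk).le]
  gcongr
  · exact gammaSeq_pos hk (Nat.one_le_iff_ne_zero.mp hn)
  · exact gammaSeq_le_Gamma hk hn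

theorem tendsto_discreteMittagLeffler (hα : 0 < α) (hβ : 0 < β) (x : ℝ) :
    Tendsto (fun n : ℕ => (n + 1) * (n : ℝ) ^ (-β) *
      discreteMittagLeffler α β (n + 1) (x * (n : ℝ) ^ (-α))) atTop (𝓝 (mittagLeffler α β x)) := by
  obtain ⟨m, hm, hsum⟩ := exists_summable_pow_div_gammaSeq hα β |x|
  have hpos (k : ℕ) : 0 < α * k + β := by positivity
  have hlim : Tendsto (fun n : ℕ => ∑' k : ℕ, x ^ k / Real.GammaSeq (α * k + β) n) atTop
      (𝓝 (mittagLeffler α β x)) := by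
    refine tendsto_tsum_of_dominated_convergence hsum
      (fun k => tendsto_const_nhds.div (Real.GammaSeq_tendsto_Gamma _)
        (Real.Gamma_pos_of_pos (hpos k)).ne') ?_
    filter_upwards [eventually_ge_atTop m] with n hmn k
    have hm₀ := gammaSeq_pos (hpos k) (Nat.one_le_iff_ne_zero.mp hm)
    have hmono := gammaSeq_monotoneOn (hpos k) hm (hm.trans hmn) hmn
    rw [norm_div, norm_pow, Real.norm_eq_abs, Real.norm_of_nonneg (hm₀.le.trans hmono)]
    gcongr
  refine hlim.congr' ?_
  filter_upwards [eventually_ne_atTop 0] with n hn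
  exact tsum_pow_div_gammaSeq α β x hn

theorem mittagLeffler_zero (α β : ℝ) : mittagLeffler α β 0 = 1 / Real.Gamma β := by
  rw [mittagLeffler, tsum_eq_single 0 fun k hk => by simp [hk]]
  simp

theorem mittagLeffler_nonneg (hα₀ : 0 < α) (hα₁ : α ≤ 1) (hβ : α ≤ β) (x : ℝ) :
    0 ≤ mittagLeffler α β x := by
  refine ge_of_tendsto (tendsto_discreteMittagLeffler hα₀ (hα₀.trans_le hβ) x) ?_
  filter_upwards [eventually_abs_mul_rpow_neg_lt_one hα₀ x] with n hx
  have := discreteMittagLeffler_nonneg hα₀.le hα₁ hβ (n + 1) hx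
  positivity

theorem mittagLeffler_monotone (hα₀ : 0 < α) (hα₁ : α ≤ 1) (hβ : α ≤ β) :
    Monotone (mittagLeffler α β) := by
  intro x y hxy
  have hβ₀ := hα₀.trans_le hβ
  refine le_of_tendsto_of_tendsto (tendsto_discreteMittagLeffler hα₀ hβ₀ x)
    (tendsto_discreteMittagLeffler hα₀ hβ₀ y) ?_
  filter_upwards [eventually_abs_mul_rpow_neg_lt_one hα₀ x,
    eventually_abs_mul_rpow_neg_lt_one hα₀ y] with n hx hy
  have hmono := discreteMittagLeffler_monotoneOn hα₀.le hα₁ hβ (n + 1) hx hy (by gcongr)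
  gcongr

theorem mittagLeffler_eq_add_mul (hα : 0 < α) (hβ : 0 < β) (x : ℝ) :
    mittagLeffler α β x = 1 / Real.Gamma β + x * mittagLeffler α (β + α) x := by
  rw [mittagLeffler, (summable_pow_div_Gamma hα hβ x).tsum_eq_zero_add, mittagLeffler,
    ← tsum_mul_left]
  simp only [Nat.cast_zero, mul_zero, zero_add, pow_zero]
  congr 1
  refine tsum_congr fun k => ?_
  rw [show α * ((k + 1 : ℕ) : ℝ) + β = α * k + (β + α) by push_cast; ring, pow_succ']
  ring

theorem hasFPowerSeriesOnBall_mittagLeffler (hα : 0 < α) (hβ : 0 < β) :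
    HasFPowerSeriesOnBall (mittagLeffler α β)
      (.ofScalars ℝ fun k : ℕ => (Real.Gamma (α * k + β))⁻¹) 0 ⊤ := by
  have hfun : mittagLeffler α β = fun x => ∑' k : ℕ, (Real.Gamma (α * k + β))⁻¹ * x ^ k := by
    funext x
    simp only [mittagLeffler, div_eq_inv_mul]
  rw [hfun]
  refine hasFPowerSeriesOnBall_tsum fun r => (summable_pow_div_Gamma hα hβ r).congr fun k => ?_
  rw [norm_inv, Real.norm_of_nonneg (Real.Gamma_pos_of_pos (by positivity)).le, div_eq_inv_mul]

theorem mittagLeffler_analyticOnNhd (hα : 0 < α) (hβ : 0 < β) :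
    AnalyticOnNhd ℝ (mittagLeffler α β) univ := by
  simpa using (hasFPowerSeriesOnBall_mittagLeffler hα hβ).analyticOnNhd

theorem mittagLeffler_eq_mul_add_deriv (hα : 0 < α) (hβ : 0 < β) (x : ℝ) :
    mittagLeffler α β x = β * mittagLeffler α (β + 1) x +
      α * (x * deriv (mittagLeffler α (β + 1)) x) := by
  have hβ₁ : 0 < β + 1 := by positivity
  have hsum := (summable_pow_div_Gamma hα hβ₁ x).hasSum
  have heuler := hasSum_nsmul_apply_fderiv (hasFPowerSeriesOnBall_mittagLeffler hα hβ₁)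
    (y := x) (by simp)
  rw [zero_add, fderiv_eq_smul_deriv, smul_eq_mul] at heuler
  refine HasSum.tsum_eq (((hsum.mul_left β).add (heuler.mul_left α)).congr_fun fun k => ?_)
  have hk : 0 < α * k + β := by positivity
  have := Real.Gamma_pos_of_pos hk
  rw [FormalMultilinearSeries.ofScalars_apply_eq, ← add_assoc, Real.Gamma_add_one hk.ne']
  simp only [nsmul_eq_mul, smul_eq_mul]
  field_simp
  ring

theorem mittagLeffler_le_mul_add_one (hα₀ : 0 < α) (hα₁ : α ≤ 1) (hβ : α ≤ β) {x : ℝ}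
    (hx : x ≤ 0) : mittagLeffler α β x ≤ β * mittagLeffler α (β + 1) x := by
  have hderiv : 0 ≤ deriv (mittagLeffler α (β + 1)) x :=
    (mittagLeffler_monotone hα₀ hα₁ (by linarith)).deriv_nonneg
  rw [mittagLeffler_eq_mul_add_deriv hα₀ (hα₀.trans_le hβ)]
  have := mul_nonpos_of_nonneg_of_nonpos hα₀.le (mul_nonpos_of_nonpos_of_nonneg hx hderiv)
  linarith

theorem mittagLeffler_add_le_div (hα₀ : 0 < α) (hα₁ : α ≤ 1) (hβ : α ≤ β) {x : ℝ} (hx : x < 0) :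
    mittagLeffler α (β + α) x ≤ 1 / Real.Gamma β / -x := by
  rw [le_div_iff₀ (neg_pos.mpr hx)]
  linarith [mittagLeffler_eq_add_mul hα₀ (hα₀.trans_le hβ) x, mittagLeffler_nonneg hα₀ hα₁ hβ x]

theorem tendsto_mittagLeffler_atBot (hα₀ : 0 < α) (hα₁ : α ≤ 1) (hβ : α ≤ β) :
    Tendsto (mittagLeffler α β) atBot (𝓝 0) := by
  have hlim : Tendsto (fun x : ℝ => β * (1 / Real.Gamma (β + 1 - α) / -x)) atBot (𝓝 0) := by
    simpa using (tendsto_const_nhds.div_atTop tendsto_neg_atBot_atTop).const_mul β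
  refine squeeze_zero' (.of_forall (mittagLeffler_nonneg hα₀ hα₁ hβ)) ?_ hlim
  filter_upwards [eventually_lt_atBot 0] with x hx
  have hdiv := mittagLeffler_add_le_div hα₀ hα₁ (β := β + 1 - α) (by linarith) hx
  rw [sub_add_cancel] at hdiv
  exact (mittagLeffler_le_mul_add_one hα₀ hα₁ hβ hx.le).trans
    (mul_le_mul_of_nonneg_left hdiv (hα₀.le.trans hβ))

theorem mittagLeffler_strictMono (hα₀ : 0 < α) (hα₁ : α ≤ 1) (hβ : α ≤ β) :
    StrictMono (mittagLeffler α β) := by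
  have hβ₀ := hα₀.trans_le hβ
  have hpos : 0 < mittagLeffler α β 0 := by
    rw [mittagLeffler_zero]
    exact one_div_pos.mpr (Real.Gamma_pos_of_pos hβ₀)
  obtain ⟨b, hb⟩ :=
    ((tendsto_mittagLeffler_atBot hα₀ hα₁ hβ).eventually_lt_const hpos).exists
  rw [← strictMonoOn_univ]
  exact strictMonoOn_of_analyticOnNhd ordConnected_univ (mittagLeffler_analyticOnNhd hα₀ hβ₀)
    ((mittagLeffler_monotone hα₀ hα₁ hβ).monotoneOn _)
    ⟨_, mem_image_of_mem _ (mem_univ b), _, mem_image_of_mem _ (mem_univ 0), hb.ne⟩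

end MittagLeffler

/-- For `0 < α ≤ 1`, `β ≥ α`, `E_{α,β}(-x)` is strictly decreasing on `[0,∞)`,
takes the value `1/Γ(β)` at `0`, tends to `0` at infinity, and maps `[0,∞)`
bijectively onto `(0, 1/Γ(β)]`; hence the inverse Mittag-Leffler function is
well defined. -/
theorem mittagLeffler_strictAnti_bijOn
    (α β : ℝ) (hα0 : 0 < α) (hα1 : α ≤ 1) (hβ : α ≤ β)
    (f : ℝ → ℝ) (hf : f = fun x => ∑' k : ℕ, (-x) ^ k / Real.Gamma (α * k + β)) :
    StrictAntiOn f (Set.Ici 0) ∧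
      f 0 = 1 / Real.Gamma β ∧
      Filter.Tendsto f Filter.atTop (nhds 0) ∧
      Set.BijOn f (Set.Ici 0) (Set.Ioc 0 (1 / Real.Gamma β)) := by
  change f = fun x => mittagLeffler α β (-x) at hf
  have hanti : StrictAnti f := by
    rw [hf]
    exact (mittagLeffler_strictMono hα0 hα1 hβ).comp_strictAnti fun _ _ => neg_lt_neg
  have hzero : f 0 = 1 / Real.Gamma β := by
    simp only [hf, neg_zero, mittagLeffler_zero]
  have hlim : Tendsto f atTop (𝓝 0) := by
    rw [hf]
    exact (tendsto_mittagLeffler_atBot hα0 hα1 hβ).comp tendsto_neg_atTop_atBot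
  have hcont : Continuous f := by
    rw [hf]
    have := (mittagLeffler_analyticOnNhd hα0 (hα0.trans_le hβ)).continuous
    fun_prop
  refine ⟨hanti.strictAntiOn _, hzero, hlim, ?_⟩
  rw [← hzero]
  exact bijOn_Ici_Ioc_of_tendsto (hanti.strictAntiOn _) hcont.continuousOn hlim
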